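/- arXiv:2104.11306 — 2 statements merged into one kernel-verified Lean document; each statement's English description precedes it below -/
import Mathlib

section
/- Let f_{0,ε} and f_1 satisfy hypotheses H1, H3 and H4. Let {u_ε}, {v_ε} ⊂ L^p(Ω;ℝ^N) be bounded sequences such that u_ε − v_ε → 0 in measure and {v_ε} is p-equiintegrable. Then liminf_{ε→0} ∫_{Ω_{0,ε}} [f_{0,ε}(u_ε) − f_{0,ε}(v_ε)] dx ≥ 0 and liminf_{ε→0} ∫_{Ω_{1,ε}} [f_1(x/ε, u_ε) − f_1(x/ε, v_ε)] dx ≥ 0. -/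
open MeasureTheory Filter Topology Metric Set
open scoped ENNReal NNReal

noncomputable section

attribute [local instance] Classical.propDecidable

namespace HC

abbrev Rd (d : ℕ) := Fin d → ℝ
abbrev Vec (N : ℕ) := Fin N → ℝ

/-- Euclidean inner product on `ℝ^N`. -/
def dot {N : ℕ} (u v : Vec N) : ℝ := ∑ j, u j * v j

/-- Euclidean norm on `ℝ^N`. -/
def eN {N : ℕ} (ξ : Vec N) : ℝ := Real.sqrt (∑ j, ξ j ^ 2)

/-- The open unit cube `Q = (0,1)^d`. -/
def Qcube (d : ℕ) : Set (Rd d) := {x | ∀ i, x i ∈ Set.Ioo (0 : ℝ) 1}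

/-- Translation by an integer vector. -/
def tr {d : ℕ} (z : Fin d → ℤ) (x : Rd d) : Rd d := fun i => x i + (z i : ℝ)

/-- The cell `ε (S + z)`. -/
def cell {d : ℕ} (ε : ℝ) (z : Fin d → ℤ) (S : Set (Rd d)) : Set (Rd d) :=
  (fun y : Rd d => fun i => ε * (y i + (z i : ℝ))) '' S

/-- The union of the soft inclusions `Ω_{0,ε}`. -/
def softPart {d : ℕ} (ε : ℝ) (Ω D0 : Set (Rd d)) : Set (Rd d) :=
  ⋃ z ∈ {z : Fin d → ℤ | cell ε z D0 ⊆ Ω}, cell ε z D0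

/-- The stiff matrix `Ω_{1,ε}`. -/
def stiffPart {d : ℕ} (ε : ℝ) (Ω D0 : Set (Rd d)) : Set (Rd d) := Ω \ softPart ε Ω D0

/-- `Ω̂_ε`, the union of the ε-cubes contained in `Ω`. -/
def hatOmega {d : ℕ} (ε : ℝ) (Ω : Set (Rd d)) : Set (Rd d) :=
  ⋃ z ∈ {z : Fin d → ℤ | cell ε z (Qcube d) ⊆ Ω}, cell ε z (Qcube d)

/-- `Q`-periodicity of a map defined on `ℝ^d`. -/
def Zper {d : ℕ} {α : Type*} (u : Rd d → α) : Prop :=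
  ∀ (x : Rd d) (z : Fin d → ℤ), u (tr z x) = u x

/-- A local Lipschitz-graph description of `Ω` near the point `x`:  after an orthogonal
change of coordinates, `Ω` is locally the epigraph of a Lipschitz function. -/
def LipschitzGraphAt {d : ℕ} (Ω : Set (Rd d)) (x : Rd d) : Prop :=
  ∃ (L : Rd d ≃ₗ[ℝ] Rd d) (i : Fin d) (φ : Rd d → ℝ) (K : ℝ≥0) (r : ℝ),
    0 < r ∧ (∀ y z : Rd d, dot (L y) (L z) = dot y z) ∧ LipschitzWith K φ ∧
    (∀ y t, φ (Function.update y i t) = φ y) ∧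
    (∀ y ∈ Metric.ball x r, (y ∈ Ω ↔ φ (L y) < L y i))

/-- `Ω` has Lipschitz boundary. -/
def HasLipschitzBoundary {d : ℕ} (Ω : Set (Rd d)) : Prop :=
  ∀ x ∈ frontier Ω, LipschitzGraphAt Ω x

/-- Compact containment `Ω' ⋐ Ω`. -/
def CpctIn {d : ℕ} (Ω' Ω : Set (Rd d)) : Prop :=
  IsOpen Ω' ∧ IsCompact (closure Ω') ∧ closure Ω' ⊆ Ω

/-- The standing geometric assumptions: `d ≥ 2`, `Ω` bounded connected open Lipschitz,
`D₀ ⋐ Q` open connected Lipschitz. -/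
def GoodSetting (d : ℕ) (Ω D0 : Set (Rd d)) : Prop :=
  2 ≤ d ∧ IsOpen Ω ∧ IsConnected Ω ∧ Bornology.IsBounded Ω ∧ HasLipschitzBoundary Ω ∧
    IsOpen D0 ∧ IsConnected D0 ∧ HasLipschitzBoundary D0 ∧
    IsCompact (closure D0) ∧ closure D0 ⊆ Qcube d

/-! ## First-order constant-coefficient operators -/

/-- The pointwise value of the formal adjoint:
`(𝒜*ψ)(x) = - ∑ i (A^{(i)})^T ∂ψ/∂x_i (x)`. -/
def adjApply {d N M : ℕ} (A : Fin d → (Vec N →ₗ[ℝ] Vec M)) (ψ : Rd d → Vec M)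
    (x : Rd d) : Vec N :=
  fun n => -∑ i, dot (A i (Pi.single n 1)) (fderiv ℝ ψ x (Pi.single i 1))

/-- Smooth test functions compactly supported in `O`. -/
def TestOn {d M : ℕ} (O : Set (Rd d)) (ψ : Rd d → Vec M) : Prop :=
  ContDiff ℝ (⊤ : ℕ∞) ψ ∧ HasCompactSupport ψ ∧ tsupport ψ ⊆ O

/-- `𝒜 u = 0` in `W^{-1,p}(O)`, i.e. distributionally on `O`. -/
def AFreeOn {d N M : ℕ} (A : Fin d → (Vec N →ₗ[ℝ] Vec M)) (O : Set (Rd d))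
    (u : Rd d → Vec N) : Prop :=
  ∀ ψ : Rd d → Vec M, TestOn O ψ → ∫ x in O, dot (u x) (adjApply A ψ x) = 0

/-- `𝒜 u = 0` on the torus `𝕋^d` (with `Q`-periodic test functions). -/
def AFreeTorus {d N M : ℕ} (A : Fin d → (Vec N →ₗ[ℝ] Vec M)) (u : Rd d → Vec N) : Prop :=
  ∀ ψ : Rd d → Vec M, ContDiff ℝ (⊤ : ℕ∞) ψ → Zper ψ →
    ∫ x in Qcube d, dot (u x) (adjApply A ψ x) = 0

/-- The symbol `𝔸[ω] = ∑ i ω_i A^{(i)}`. -/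
def symb {d N M : ℕ} (A : Fin d → (Vec N →ₗ[ℝ] Vec M)) (ω : Rd d) : Vec N →ₗ[ℝ] Vec M :=
  ∑ i, ω i • A i

/-- Murat's constant rank condition. -/
def ConstantRank {d N M : ℕ} (A : Fin d → (Vec N →ₗ[ℝ] Vec M)) : Prop :=
  ∃ r : ℕ, ∀ ω : Rd d, ω ≠ 0 → Module.finrank ℝ (LinearMap.range (symb A ω)) = r

/-! ## Lp spaces and convergences -/

def MemLpOn {d N : ℕ} (p : ℝ) (O : Set (Rd d)) (u : Rd d → Vec N) : Prop :=
  MemLp u (ENNReal.ofReal p) (volume.restrict O)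

def LpNormOn {d N : ℕ} (p : ℝ) (O : Set (Rd d)) (u : Rd d → Vec N) : ℝ :=
  (eLpNorm (fun x => eN (u x)) (ENNReal.ofReal p) (volume.restrict O)).toReal

/-- The conjugate exponent `p' = p/(p-1)`. -/
def conjExp (p : ℝ) : ℝ := p / (p - 1)

/-- Weak convergence in `L^p(O; ℝ^N)` of a family along a filter. -/
def WeakLpTendsto {d N : ℕ} (p : ℝ) (O : Set (Rd d)) {ι : Type*} (l : Filter ι)
    (u : ι → Rd d → Vec N) (v : Rd d → Vec N) : Prop :=
  ∀ g : Rd d → Vec N, MemLpOn (conjExp p) O g →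
    Tendsto (fun k => ∫ x in O, dot (u k x) (g x)) l (𝓝 (∫ x in O, dot (v x) (g x)))

/-- `p`-equiintegrability of a family in `L^p(O)`. -/
def PEquiintegrable {d N : ℕ} (p : ℝ) (O : Set (Rd d)) {ι : Type*}
    (u : ι → Rd d → Vec N) : Prop :=
  ∀ η : ℝ, 0 < η → ∃ m : ℝ, 0 < m ∧ ∀ (k : ι) (E : Set (Rd d)), MeasurableSet E → E ⊆ O →
    volume E < ENNReal.ofReal m → ∫ x in E, eN (u k x) ^ p < η

/-- Membership in `L^p(Ω × Q; ℝ^N)`. -/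
def MemLpProd {d N : ℕ} (p : ℝ) (Ω : Set (Rd d)) (v : Rd d → Rd d → Vec N) : Prop :=
  MemLp (fun q : Rd d × Rd d => v q.1 q.2) (ENNReal.ofReal p)
    ((volume.restrict Ω).prod (volume.restrict (Qcube d)))

def LpNormProd {d N : ℕ} (p : ℝ) (Ω : Set (Rd d)) (v : Rd d → Rd d → Vec N) : ℝ :=
  (eLpNorm (fun q : Rd d × Rd d => eN (v q.1 q.2)) (ENNReal.ofReal p)
    ((volume.restrict Ω).prod (volume.restrict (Qcube d)))).toReal

/-- `p`-equiintegrability of a family in `L^p(Ω × Q)`. -/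
def PEquiintegrableProd {d N : ℕ} (p : ℝ) (Ω : Set (Rd d)) {ι : Type*}
    (w : ι → Rd d → Rd d → Vec N) : Prop :=
  ∀ η : ℝ, 0 < η → ∃ m : ℝ, 0 < m ∧ ∀ (k : ι) (E : Set (Rd d × Rd d)), MeasurableSet E →
    ((volume.restrict Ω).prod (volume.restrict (Qcube d))) E < ENNReal.ofReal m →
    ∫ q in E, eN (w k q.1 q.2) ^ p
        ∂((volume.restrict Ω).prod (volume.restrict (Qcube d))) < η

/-! ## Two-scale convergence and unfolding -/

/-- `x ↦ sup_{y ∈ Q̄} |g(x,y)|`. -/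
def perSup {d N : ℕ} (g : Rd d → Rd d → Vec N) (x : Rd d) : ℝ :=
  sSup ((fun y => eN (g x y)) '' closure (Qcube d))

/-- Test functions for two-scale convergence: elements of `L^{p'}(Ω; C_per(ℝ^d;ℝ^N))`. -/
def TwoScaleTest {d N : ℕ} (p : ℝ) (Ω : Set (Rd d)) (g : Rd d → Rd d → Vec N) : Prop :=
  (∀ x, Continuous (g x)) ∧ (∀ x, Zper (g x)) ∧
    MemLp (perSup g) (ENNReal.ofReal (conjExp p)) (volume.restrict Ω)

/-- Weak two-scale convergence in `L^p`, along a filter `l` with scales `η`. -/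
def WeakTwoScale {d N : ℕ} (p : ℝ) (Ω : Set (Rd d)) {ι : Type*} (l : Filter ι) (η : ι → ℝ)
    (u : ι → Rd d → Vec N) (v : Rd d → Rd d → Vec N) : Prop :=
  ∀ g : Rd d → Rd d → Vec N, TwoScaleTest p Ω g →
    Tendsto (fun k => ∫ x in Ω, dot (u k x) (g x ((η k)⁻¹ • x))) l
      (𝓝 (∫ x in Ω, ∫ y in Qcube d, dot (v x y) (g x y)))

/-- Strong two-scale convergence in `L^p`. -/
def StrongTwoScale {d N : ℕ} (p : ℝ) (Ω : Set (Rd d)) {ι : Type*} (l : Filter ι) (η : ι → ℝ)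
    (u : ι → Rd d → Vec N) (v : Rd d → Rd d → Vec N) : Prop :=
  WeakTwoScale p Ω l η u v ∧ Tendsto (fun k => LpNormOn p Ω (u k)) l (𝓝 (LpNormProd p Ω v))

/-- The unfolding operator `S_ε v (x,y) = ṽ(ε⌊x/ε⌋ + εy)`, where `ṽ` is the extension of `v`
by `0` outside `Ω`. -/
def unfold {d N : ℕ} (ε : ℝ) (Ω : Set (Rd d)) (v : Rd d → Vec N) :
    Rd d → Rd d → Vec N :=
  fun x y => Set.indicator Ω v (fun i => ε * ((⌊x i / ε⌋ : ℝ) + y i))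

/-! ## The energy densities and their hypotheses -/

def H1soft {N : ℕ} (f0 : ℝ → Vec N → ℝ) : Prop := ∀ ε : ℝ, 0 < ε → Continuous (f0 ε)

def H1stiff {d N : ℕ} (f1 : Rd d → Vec N → ℝ) : Prop :=
  (∀ ξ, Measurable fun x => f1 x ξ) ∧ ∀ x, Continuous (f1 x)

def H2 {d N : ℕ} (f1 : Rd d → Vec N → ℝ) : Prop :=
  ∀ (x : Rd d) (z : Fin d → ℤ) (ξ : Vec N), f1 (tr z x) ξ = f1 x ξ

def H3soft {N : ℕ} (p a lam Lam : ℝ) (f0 : ℝ → Vec N → ℝ) : Prop :=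
  0 < a ∧ 0 < lam ∧ 0 < Lam ∧
    ∀ ε : ℝ, 0 < ε → ∀ ξ, lam * (-a + eN ξ ^ p) ≤ f0 ε ξ ∧ f0 ε ξ ≤ Lam * (1 + eN ξ ^ p)

def H3stiff {d N : ℕ} (p a lam Lam : ℝ) (f1 : Rd d → Vec N → ℝ) : Prop :=
  0 < a ∧ 0 < lam ∧ 0 < Lam ∧
    ∀ (x : Rd d) (ξ : Vec N), lam * (-a + eN ξ ^ p) ≤ f1 x ξ ∧ f1 x ξ ≤ Lam * (1 + eN ξ ^ p)

def H4soft {N : ℕ} (p mu : ℝ) (f0 : ℝ → Vec N → ℝ) : Prop :=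
  0 < mu ∧ ∀ ε : ℝ, 0 < ε → ∀ ξ ζ : Vec N,
    |f0 ε ξ - f0 ε ζ| ≤ mu * (1 + eN ξ ^ (p - 1) + eN ζ ^ (p - 1)) * eN (ξ - ζ)

def H4stiff {d N : ℕ} (p mu : ℝ) (f1 : Rd d → Vec N → ℝ) : Prop :=
  0 < mu ∧ ∀ (x : Rd d) (ξ ζ : Vec N),
    |f1 x ξ - f1 x ζ| ≤ mu * (1 + eN ξ ^ (p - 1) + eN ζ ^ (p - 1)) * eN (ξ - ζ)

def H5 {N : ℕ} (f0 : ℝ → Vec N → ℝ) (f0lim : Vec N → ℝ) : Prop :=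
  ∀ ξ, Tendsto (fun ε => f0 ε ξ) (𝓝[>] (0 : ℝ)) (𝓝 (f0lim ξ))

/-! ## The admissible class: Assumptions 1 and 2 -/

/-- Assumption 1 (null average). -/
def NullAverage {d N M : ℕ} (p : ℝ) (A : Fin d → (Vec N →ₗ[ℝ] Vec M))
    (D0 : Set (Rd d)) : Prop :=
  ∀ u : Rd d → Vec N, MemLp u (ENNReal.ofReal p) (volume.restrict (Qcube d)) → Zper u →
    (∀ᵐ y ∂volume.restrict (Qcube d \ D0), u y = 0) → AFreeTorus A u →
    (∫ y in Qcube d, u y) = 0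

/-- Assumption 2 (`𝒜`-free extension operators on the perforated domains). -/
def ExtensionProperty {d N M : ℕ} (p : ℝ) (A : Fin d → (Vec N →ₗ[ℝ] Vec M))
    (Ω D0 : Set (Rd d)) (c : ℝ) (E : ℝ → (Rd d → Vec N) → (Rd d → Vec N)) : Prop :=
  0 < c ∧
  (∀ ε : ℝ, 0 < ε → ∀ u : Rd d → Vec N, MemLpOn p Ω u → AFreeOn A Ω u →
    (∀ᵐ x ∂volume.restrict (stiffPart ε Ω D0), E ε u x = u x) ∧
    MemLpOn p Ω (E ε u) ∧
    LpNormOn p Ω (E ε u) ≤ c * LpNormOn p (stiffPart ε Ω D0) u ∧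
    AFreeOn A Ω (E ε u)) ∧
  (∀ u : ℝ → Rd d → Vec N, (∀ ε : ℝ, 0 < ε → MemLpOn p Ω (u ε) ∧ AFreeOn A Ω (u ε)) →
    PEquiintegrable p Ω (fun ε : {ε : ℝ // 0 < ε} => u ε.1) →
    PEquiintegrable p Ω (fun ε : {ε : ℝ // 0 < ε} => E ε.1 (u ε.1)))

/-- An admissible operator: constant rank together with Assumptions 1 and 2. -/
def Admissible {d N M : ℕ} (p : ℝ) (A : Fin d → (Vec N →ₗ[ℝ] Vec M))
    (Ω D0 : Set (Rd d)) : Prop :=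
  ConstantRank A ∧ NullAverage p A D0 ∧ ∃ c E, ExtensionProperty p A Ω D0 c E

/-! ## High-contrast convergence -/

/-- High-contrast convergence of a family `u` (with scales `η`) to `v`. -/
def HCTendsto {d N M : ℕ} (p : ℝ) (A : Fin d → (Vec N →ₗ[ℝ] Vec M)) (Ω D0 : Set (Rd d))
    {ι : Type*} (l : Filter ι) (η : ι → ℝ) (u : ι → Rd d → Vec N) (v : Rd d → Vec N) : Prop :=
  WeakLpTendsto p Ω l (fun k x => η k • u k x) 0 ∧
  ∃ ut : ι → Rd d → Vec N,
    (∀ k, MemLpOn p Ω (ut k) ∧ AFreeOn A Ω (ut k)) ∧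
    (∀ k, ∀ᵐ x ∂volume.restrict (stiffPart (η k) Ω D0), u k x = ut k x) ∧
    WeakLpTendsto p Ω l ut v

/-! ## The functionals -/

def U1 {d N M : ℕ} (p : ℝ) (A : Fin d → (Vec N →ₗ[ℝ] Vec M)) (Ω : Set (Rd d)) :
    Set (Rd d → Vec N) :=
  {u | MemLpOn p Ω u ∧ AFreeOn A Ω u}

def U0 {d N M : ℕ} (p : ℝ) (A : Fin d → (Vec N →ₗ[ℝ] Vec M)) (Ω D0 Ω' : Set (Rd d)) :
    Set (Rd d → Rd d → Vec N) :=
  {u | MemLpProd p Ω u ∧ (∀ x, Zper (u x)) ∧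
    (∀ x, ∀ᵐ y ∂volume.restrict (Qcube d \ D0), u x y = 0) ∧
    (∀ᵐ x ∂volume.restrict Ω', AFreeTorus A (u x))}

/-- The constant `α₀`. -/
def alpha0 {d N M : ℕ} (p : ℝ) (A : Fin d → (Vec N →ₗ[ℝ] Vec M)) (Ω D0 : Set (Rd d))
    (f0lim : Vec N → ℝ) : ℝ :=
  sSup {c : ℝ | ∃ Ω' : Set (Rd d), CpctIn Ω' Ω ∧
    c = sInf {e : ℝ | ∃ u ∈ U0 p A Ω D0 Ω', e = ∫ x in Ω', ∫ y in D0, f0lim (u x y)}}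

/-- The `ℤ^d`-periodization of `D₁ = Q ∖ D₀`. -/
def D1per {d : ℕ} (D0 : Set (Rd d)) : Set (Rd d) :=
  ⋃ z : Fin d → ℤ, tr z '' (Qcube d \ D0)

/-- The homogenized stiff energy density `f_hom`. -/
def fhom {d N M : ℕ} (p : ℝ) (A : Fin d → (Vec N →ₗ[ℝ] Vec M)) (D0 : Set (Rd d))
    (f1 : Rd d → Vec N → ℝ) (ξ : Vec N) : ℝ :=
  liminf (fun k : ℕ =>
    sInf {c : ℝ | ∃ v : Rd d → Vec N,
      MemLp v (ENNReal.ofReal p) (volume.restrict (Qcube d)) ∧ Zper v ∧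
      (∫ y in Qcube d, v y) = 0 ∧ AFreeTorus A v ∧
      c = ∫ y in Qcube d ∩ {y | (k : ℝ) • y ∈ D1per D0}, f1 ((k : ℝ) • y) (ξ + v y)}) atTop

/-- The high-contrast energy `F_ε`. -/
def Feps {d N M : ℕ} (p : ℝ) (A : Fin d → (Vec N →ₗ[ℝ] Vec M)) (Ω D0 : Set (Rd d))
    (f0 : ℝ → Vec N → ℝ) (f1 : Rd d → Vec N → ℝ) (ε : ℝ) (u : Rd d → Vec N) : EReal :=
  if u ∈ U1 p A Ω then
    (((∫ x in softPart ε Ω D0, f0 ε (ε • u x)) +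
      ∫ x in stiffPart ε Ω D0, f1 (ε⁻¹ • x) (u x) : ℝ) : EReal)
  else ⊤

/-- The soft energy `F_{0,ε}`. -/
def F0eps {d N M : ℕ} (p : ℝ) (A : Fin d → (Vec N →ₗ[ℝ] Vec M)) (Ω D0 : Set (Rd d))
    (f0 : ℝ → Vec N → ℝ) (ε : ℝ) (u : Rd d → Vec N) : EReal :=
  if u ∈ U1 p A Ω then ((∫ x in softPart ε Ω D0, f0 ε (ε • u x) : ℝ) : EReal) else ⊤

/-- The stiff energy `F_{1,ε}`. -/
def F1eps {d N M : ℕ} (p : ℝ) (A : Fin d → (Vec N →ₗ[ℝ] Vec M)) (Ω D0 : Set (Rd d))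
    (f1 : Rd d → Vec N → ℝ) (ε : ℝ) (u : Rd d → Vec N) : EReal :=
  if u ∈ U1 p A Ω then ((∫ x in stiffPart ε Ω D0, f1 (ε⁻¹ • x) (u x) : ℝ) : EReal) else ⊤

/-- The limiting functional `F = α₀ + ∫_Ω f_hom(u)`. -/
def Flim {d N M : ℕ} (p : ℝ) (A : Fin d → (Vec N →ₗ[ℝ] Vec M)) (Ω D0 : Set (Rd d))
    (f0lim : Vec N → ℝ) (f1 : Rd d → Vec N → ℝ) (u : Rd d → Vec N) : EReal :=
  if u ∈ U1 p A Ω then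
    ((alpha0 p A Ω D0 f0lim + ∫ x in Ω, fhom p A D0 f1 (u x) : ℝ) : EReal)
  else ⊤

/-- The limiting soft functional `F₀`. -/
def F0lim {d N M : ℕ} (p : ℝ) (A : Fin d → (Vec N →ₗ[ℝ] Vec M)) (Ω D0 : Set (Rd d))
    (f0lim : Vec N → ℝ) (u : Rd d → Vec N) : EReal :=
  if u =ᵐ[volume.restrict Ω] (0 : Rd d → Vec N) then ((alpha0 p A Ω D0 f0lim : ℝ) : EReal)
  else ⊤

/-- The limiting stiff functional `F₁`. -/
def F1lim {d N M : ℕ} (p : ℝ) (A : Fin d → (Vec N →ₗ[ℝ] Vec M)) (Ω D0 : Set (Rd d))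
    (f1 : Rd d → Vec N → ℝ) (u : Rd d → Vec N) : EReal :=
  if u ∈ U1 p A Ω then ((∫ x in Ω, fhom p A D0 f1 (u x) : ℝ) : EReal) else ⊤

/-! ## Higher-order operators, potentials, Sobolev spaces -/

/-- The pointwise value of the formal adjoint of the `k`-th order homogeneous operator
with coefficients `A`. -/
def adjOp {d k N M : ℕ} (A : (Fin k → Fin d) → (Vec N →ₗ[ℝ] Vec M)) (ψ : Rd d → Vec M)
    (x : Rd d) : Vec N :=
  fun n => (-1 : ℝ) ^ k * ∑ j : Fin k → Fin d,
    dot (A j (Pi.single n 1)) (iteratedFDeriv ℝ k ψ x (fun t => Pi.single (j t) 1))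

/-- `𝒜 u = 0` in `W^{-k,p}(O)` for a `k`-th order operator. -/
def AFreeOnK {d k N M : ℕ} (A : (Fin k → Fin d) → (Vec N →ₗ[ℝ] Vec M)) (O : Set (Rd d))
    (u : Rd d → Vec N) : Prop :=
  ∀ ψ : Rd d → Vec M, TestOn O ψ → ∫ x in O, dot (u x) (adjOp A ψ x) = 0

/-- The symbol of a `k`-th order homogeneous operator. -/
def symbK {d k N M : ℕ} (A : (Fin k → Fin d) → (Vec N →ₗ[ℝ] Vec M)) (ω : Rd d) :
    Vec N →ₗ[ℝ] Vec M :=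
  ∑ j : Fin k → Fin d, (∏ t, ω (j t)) • A j

def ConstantRankK {d k N M : ℕ} (A : (Fin k → Fin d) → (Vec N →ₗ[ℝ] Vec M)) : Prop :=
  ∃ r : ℕ, ∀ ω : Rd d, ω ≠ 0 → Module.finrank ℝ (LinearMap.range (symbK A ω)) = r

/-- `g` is the weak partial derivative `∂_j w` (for the `m`-tuple `j` of directions) on `U`. -/
def IsWeakDerivOn {d m M : ℕ} (U : Set (Rd d)) (j : Fin m → Fin d) (w g : Rd d → Vec M) :
    Prop :=
  ∀ φ : Rd d → ℝ, ContDiff ℝ (⊤ : ℕ∞) φ → HasCompactSupport φ → tsupport φ ⊆ U →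
    ∀ cc : Fin M, (∫ x in U, w x cc * iteratedFDeriv ℝ m φ x (fun t => Pi.single (j t) 1))
      = (-1 : ℝ) ^ m * ∫ x in U, g x cc * φ x

/-- Membership in the Sobolev space `W^{ℓ,p}(U; ℝ^M)`. -/
def MemW {d M : ℕ} (ℓ : ℕ) (p : ℝ) (U : Set (Rd d)) (w : Rd d → Vec M) : Prop :=
  MemLpOn p U w ∧ ∀ m : ℕ, m ≤ ℓ → ∀ j : Fin m → Fin d,
    ∃ g : Rd d → Vec M, MemLpOn p U g ∧ IsWeakDerivOn U j w g

/-- A choice of the weak derivative `∂_j w` on `U` (defaults to `0`). -/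
def wDeriv {d m M : ℕ} (p : ℝ) (U : Set (Rd d)) (j : Fin m → Fin d) (w : Rd d → Vec M) :
    Rd d → Vec M :=
  if h : ∃ g : Rd d → Vec M, MemLpOn p U g ∧ IsWeakDerivOn U j w g then h.choose else 0

/-- The `L^p(U)` norm of the `ℓ`-th order (weak) gradient `∇^ℓ w`. -/
def gradLp {d M : ℕ} (ℓ : ℕ) (p : ℝ) (U : Set (Rd d)) (w : Rd d → Vec M) : ℝ :=
  (eLpNorm (fun x => Real.sqrt (∑ j : Fin ℓ → Fin d, eN (wDeriv p U j w x) ^ 2))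
    (ENNReal.ofReal p) (volume.restrict U)).toReal

/-- The action `ℬ w = ∑_{|j|=ℓ} B^{(j)} ∂_j w` of an `ℓ`-th order operator on a Sobolev
function, through its weak derivatives. -/
def opApplyW {d ℓ M N : ℕ} (p : ℝ) (U : Set (Rd d))
    (B : (Fin ℓ → Fin d) → (Vec M →ₗ[ℝ] Vec N)) (w : Rd d → Vec M) : Rd d → Vec N :=
  fun x => ∑ j : Fin ℓ → Fin d, B j (wDeriv p U j w x)

/-- `U` is an `𝒜`-extension domain (for a `k`-th order operator `𝒜`). -/
def AExtensionDomainK {d k N M : ℕ} (p : ℝ) (A : (Fin k → Fin d) → (Vec N →ₗ[ℝ] Vec M))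
    (U : Set (Rd d)) : Prop :=
  ∃ (E : (Rd d → Vec N) → (Rd d → Vec N)) (c : ℝ), 0 < c ∧
    ∀ u : Rd d → Vec N, MemLpOn p U u → AFreeOnK A U u →
      (∀ᵐ x ∂volume.restrict U, E u x = u x) ∧
      MemLp (E u) (ENNReal.ofReal p) volume ∧
      LpNormOn p Set.univ (E u) ≤ c * LpNormOn p U u ∧
      AFreeOnK A Set.univ (E u)

/-- `U` is an `𝒜`-extension domain (first-order version). -/
def AExtensionDomain1 {d N M : ℕ} (p : ℝ) (A : Fin d → (Vec N →ₗ[ℝ] Vec M))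
    (U : Set (Rd d)) : Prop :=
  ∃ (E : (Rd d → Vec N) → (Rd d → Vec N)) (c : ℝ), 0 < c ∧
    ∀ u : Rd d → Vec N, MemLpOn p U u → AFreeOn A U u →
      (∀ᵐ x ∂volume.restrict U, E u x = u x) ∧
      MemLp (E u) (ENNReal.ofReal p) volume ∧
      LpNormOn p Set.univ (E u) ≤ c * LpNormOn p U u ∧
      AFreeOn A Set.univ (E u)

/-- The `W^{m,q}(ℝ^d)` norm of a smooth function. -/
def WmNorm {d M : ℕ} (m : ℕ) (q : ℝ) (ψ : Rd d → Vec M) : ℝ :=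
  ∑ j ∈ Finset.range (m + 1),
    (eLpNorm (fun x => ‖iteratedFDeriv ℝ j ψ x‖) (ENNReal.ofReal q) volume).toReal

/-- The `W^{-m,p}(ℝ^d)` norm of `𝒜 u`, via duality with `W^{m,p'}`. -/
def negNorm {d k N M : ℕ} (m : ℕ) (p : ℝ) (A : (Fin k → Fin d) → (Vec N →ₗ[ℝ] Vec M))
    (u : Rd d → Vec N) : ℝ :=
  sSup {c : ℝ | ∃ ψ : Rd d → Vec M, ContDiff ℝ (⊤ : ℕ∞) ψ ∧ HasCompactSupport ψ ∧
    WmNorm m (conjExp p) ψ ≤ 1 ∧ c = ∫ x, dot (u x) (adjOp A ψ x)}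

/-! ## Fourier-analytic material -/

/-- Fourier transform of a (complexified, vector-valued) function. -/
def ftC {d N : ℕ} (f : Rd d → (Fin N → ℂ)) (ω : Rd d) : Fin N → ℂ :=
  ∫ x : Rd d, Complex.exp (-(2 * Real.pi * Complex.I) * (∑ i, (x i : ℂ) * (ω i : ℂ))) • f x

/-- Complexification of a real vector-valued map. -/
def cplx {d N : ℕ} (u : Rd d → Vec N) : Rd d → (Fin N → ℂ) := fun x n => ((u x n : ℝ) : ℂ)

/-- Action on `ℂ^N` of (the complexification of) a real linear map on `ℝ^N`. -/
def matC {N : ℕ} (P : Vec N →ₗ[ℝ] Vec N) (v : Fin N → ℂ) : Fin N → ℂ :=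
  fun m => ∑ n, ((P (Pi.single n 1) m : ℝ) : ℂ) * v n

end HC

namespace HC

/-! ## Auxiliary lemmas for the substitution lemma -/

lemma liminf_nonneg_aux (F : ℝ → ℝ) (l : Filter ℝ)
    (h : ∀ δ : ℝ, 0 < δ → ∀ᶠ ε in l, -δ ≤ F ε) : (0 : ℝ) ≤ Filter.liminf F l := by
  rw [Filter.liminf_eq]
  by_cases hb : BddAbove {a | ∀ᶠ n in l, a ≤ F n}
  · refine le_of_forall_pos_le_add fun δ hδ => ?_
    have := le_csSup hb (h δ hδ)
    linarith
  · rw [Real.sSup_of_not_bddAbove hb]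

lemma eN_nonneg {N : ℕ} (ξ : Vec N) : 0 ≤ eN ξ := Real.sqrt_nonneg _

lemma continuous_eN {N : ℕ} : Continuous (eN : Vec N → ℝ) := by
  unfold eN; fun_prop

lemma eN_le {N : ℕ} (ξ : Vec N) : eN ξ ≤ (N + 1) * ‖ξ‖ := by
  unfold eN
  have hn := norm_nonneg ξ
  refine Real.sqrt_le_iff.2 ⟨by positivity, ?_⟩
  have h1 : ∑ j, ξ j ^ 2 ≤ ∑ _j : Fin N, ‖ξ‖ ^ 2 := by
    refine Finset.sum_le_sum fun j _ => ?_
    have := norm_le_pi_norm ξ j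
    rw [← sq_abs]
    exact pow_le_pow_left₀ (abs_nonneg _) this 2
  refine h1.trans ?_
  rw [Finset.sum_const, Finset.card_univ, Fintype.card_fin, nsmul_eq_mul, mul_pow]
  refine mul_le_mul_of_nonneg_right ?_ (by positivity)
  have : (0 : ℝ) ≤ N := Nat.cast_nonneg N
  nlinarith

lemma memLp_eN {d N : ℕ} {p : ℝ} {O : Set (Rd d)} {u : Rd d → Vec N} (hu : MemLpOn p O u) :
    MemLp (fun x => eN (u x)) (ENNReal.ofReal p) (volume.restrict O) := by
  refine MemLp.of_le_mul (c := N + 1) hu (continuous_eN.comp_aestronglyMeasurable hu.1) ?_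
  refine Eventually.of_forall fun x => ?_
  rw [Real.norm_of_nonneg (eN_nonneg _)]
  exact eN_le _

lemma integrable_eN {d N : ℕ} {p : ℝ} (hp : 1 < p) {O : Set (Rd d)} {u : Rd d → Vec N}
    (hu : MemLpOn p O u) : IntegrableOn (fun x => eN (u x) ^ p) O := by
  have hp0 : 0 < p := by linarith
  have := (memLp_eN hu).integrable_norm_rpow (by simpa using hp0) ENNReal.ofReal_ne_top
  rw [ENNReal.toReal_ofReal hp0.le] at this
  simp only [Real.norm_of_nonneg (eN_nonneg _)] at this
  exact this

lemma integral_eN_le {d N : ℕ} {p C : ℝ} (hp : 1 < p) {O : Set (Rd d)} {u : Rd d → Vec N}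
    (hu : MemLpOn p O u) (hC : LpNormOn p O u ≤ C) :
    ∫ x in O, eN (u x) ^ p ≤ |C| ^ p := by
  have hp0 : 0 < p := by linarith
  unfold LpNormOn at hC
  rw [(memLp_eN hu).eLpNorm_eq_integral_rpow_norm (by simpa using hp0) ENNReal.ofReal_ne_top,
    ENNReal.toReal_ofReal hp0.le] at hC
  simp only [Real.norm_of_nonneg (eN_nonneg _)] at hC
  have h0 : 0 ≤ ∫ x in O, eN (u x) ^ p :=
    integral_nonneg fun x => Real.rpow_nonneg (eN_nonneg _) _
  rw [ENNReal.toReal_ofReal (Real.rpow_nonneg h0 _)] at hC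
  have h1 := Real.rpow_le_rpow (Real.rpow_nonneg h0 _) (hC.trans (le_abs_self C)) hp0.le
  rwa [← Real.rpow_mul h0, inv_mul_cancel₀ hp0.ne', Real.rpow_one] at h1

lemma rpow_sub_one_le {p t : ℝ} (hp : 1 < p) (ht : 0 ≤ t) : t ^ (p - 1) ≤ 1 + t ^ p := by
  have h0 := Real.rpow_nonneg ht p
  rcases le_total t 1 with h | h
  · have := Real.rpow_le_one ht h (by linarith : 0 ≤ p - 1)
    linarith
  · have := Real.rpow_le_rpow_of_exponent_le h (by linarith : p - 1 ≤ p)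
    linarith

lemma core_bound {d N : ℕ} {p a lam Lam mu s : ℝ} (hp : 1 < p) (ha : 0 < a) (hlam : 0 < lam)
    (hLam : 0 < Lam) (hmu : 0 < mu) (hs : 0 ≤ s)
    {Ω S E : Set (Rd d)} (hΩ : MeasurableSet Ω) (hfin : volume Ω ≠ ⊤)
    (hS : MeasurableSet S) (hSΩ : S ⊆ Ω) (hE : MeasurableSet E) (hEΩ : E ⊆ Ω)
    (g : Rd d → Vec N → ℝ)
    (h3 : ∀ x ξ, lam * (-a + eN ξ ^ p) ≤ g x ξ ∧ g x ξ ≤ Lam * (1 + eN ξ ^ p))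
    (h4 : ∀ x (ξ ζ : Vec N),
      |g x ξ - g x ζ| ≤ mu * (1 + eN ξ ^ (p - 1) + eN ζ ^ (p - 1)) * eN (ξ - ζ))
    (U V : Rd d → Vec N) (hU : MemLpOn p Ω U) (hV : MemLpOn p Ω V)
    (hclose : ∀ x ∈ Ω, x ∉ E → eN (U x - V x) ≤ s) :
    -(mu * s * (3 * volume.real Ω + (∫ x in Ω, eN (U x) ^ p) + ∫ x in Ω, eN (V x) ^ p)
      + ((lam * a + Lam) * volume.real E + Lam * ∫ x in E, eN (V x) ^ p))
      ≤ ∫ x in S, (g x (U x) - g x (V x)) := by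
  have iU := integrable_eN hp hU
  have iV := integrable_eN hp hV
  have ic : ∀ c : ℝ, IntegrableOn (fun _ : Rd d => c) Ω := fun c => integrableOn_const hfin
  set h1 : Rd d → ℝ := fun x => mu * s * (3 + eN (U x) ^ p + eN (V x) ^ p) with hh1
  set h2 : Rd d → ℝ := fun x => lam * a + Lam + Lam * eN (V x) ^ p with hh2
  have nU : ∀ x, 0 ≤ eN (U x) ^ p := fun x => Real.rpow_nonneg (eN_nonneg _) _
  have nV : ∀ x, 0 ≤ eN (V x) ^ p := fun x => Real.rpow_nonneg (eN_nonneg _) _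
  have n1 : ∀ x, 0 ≤ h1 x := fun x => by
    have := nU x; have := nV x; simp only [hh1]; positivity
  have n2 : ∀ x, 0 ≤ h2 x := fun x => by
    have := nV x; simp only [hh2]; positivity
  have i1 : IntegrableOn h1 Ω := (((ic 3).add iU).add iV).const_mul _
  have i2 : IntegrableOn h2 Ω := (ic _).add (iV.const_mul _)
  have i2E : IntegrableOn (E.indicator h2) Ω := i2.indicator hE
  have e1 : ∫ x in Ω, h1 x = mu * s * (3 * volume.real Ω + (∫ x in Ω, eN (U x) ^ p)
      + ∫ x in Ω, eN (V x) ^ p) := by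
    simp only [hh1]
    rw [integral_const_mul, integral_add (f := fun x => 3 + eN (U x) ^ p) ((ic 3).add iU) iV,
      integral_add (ic 3) iU]
    simp [mul_comm]
  have e2 : ∫ x in Ω, E.indicator h2 x
      = (lam * a + Lam) * volume.real E + Lam * ∫ x in E, eN (V x) ^ p := by
    rw [setIntegral_indicator hE, inter_eq_self_of_subset_right hEΩ]
    simp only [hh2]
    rw [integral_add ((ic _).mono_set hEΩ) ((iV.mono_set hEΩ).const_mul _), integral_const_mul]
    simp [mul_comm]
  rw [← e1, ← e2, ← integral_add i1 i2E]
  have itot : IntegrableOn (fun x => h1 x + E.indicator h2 x) Ω := i1.add i2E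
  have ntot : ∀ x, 0 ≤ h1 x + E.indicator h2 x := fun x =>
    add_nonneg (n1 x) (indicator_nonneg (fun y _ => n2 y) x)
  by_cases hint : IntegrableOn (fun x => g x (U x) - g x (V x)) S
  · have hmono : ∫ x in S, (h1 x + E.indicator h2 x) ≤ ∫ x in Ω, (h1 x + E.indicator h2 x) :=
      setIntegral_mono_set itot (Eventually.of_forall ntot) (Eventually.of_forall hSΩ)
    have hlow : ∫ x in S, -(h1 x + E.indicator h2 x) ≤ ∫ x in S, (g x (U x) - g x (V x)) := by
      refine setIntegral_mono_on (itot.mono_set hSΩ).neg hint hS fun x hx => ?_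
      by_cases hxE : x ∈ E
      · rw [indicator_of_mem hxE]
        have := (h3 x (U x)).1
        have := (h3 x (V x)).2
        have := n1 x
        have := mul_nonneg hlam.le (nU x)
        simp only [hh2]
        nlinarith
      · rw [indicator_of_notMem hxE, add_zero]
        have c := hclose x (hSΩ hx) hxE
        have b := (abs_le.1 (h4 x (U x) (V x))).1
        have r1 := rpow_sub_one_le hp (eN_nonneg (U x))
        have r2 := rpow_sub_one_le hp (eN_nonneg (V x))
        have q1 := Real.rpow_nonneg (eN_nonneg (U x)) (p - 1)
        have q2 := Real.rpow_nonneg (eN_nonneg (V x)) (p - 1)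
        have k : mu * (1 + eN (U x) ^ (p - 1) + eN (V x) ^ (p - 1)) * eN (U x - V x)
            ≤ mu * (3 + eN (U x) ^ p + eN (V x) ^ p) * s := by
          have := nU x
          have := nV x
          refine mul_le_mul (mul_le_mul_of_nonneg_left (by linarith) hmu.le) c (eN_nonneg _)
            (by positivity)
        simp only [hh1]
        linarith
    rw [integral_neg] at hlow
    linarith
  · rw [integral_undef hint]
    have : 0 ≤ ∫ x in Ω, (h1 x + E.indicator h2 x) := integral_nonneg fun x => ntot x
    linarith

lemma main_aux {d N : ℕ} {p a lam Lam mu : ℝ} (hp : 1 < p) (ha : 0 < a) (hlam : 0 < lam)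
    (hLam : 0 < Lam) (hmu : 0 < mu)
    {Ω : Set (Rd d)} (hΩ : MeasurableSet Ω) (hfin : volume Ω ≠ ⊤)
    (S : ℝ → Set (Rd d)) (hS : ∀ ε, 0 < ε → MeasurableSet (S ε)) (hSΩ : ∀ ε, S ε ⊆ Ω)
    (g : ℝ → Rd d → Vec N → ℝ)
    (h3 : ∀ ε, 0 < ε → ∀ x ξ,
      lam * (-a + eN ξ ^ p) ≤ g ε x ξ ∧ g ε x ξ ≤ Lam * (1 + eN ξ ^ p))
    (h4 : ∀ ε, 0 < ε → ∀ x (ξ ζ : Vec N),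
      |g ε x ξ - g ε x ζ| ≤ mu * (1 + eN ξ ^ (p - 1) + eN ζ ^ (p - 1)) * eN (ξ - ζ))
    (u v : ℝ → Rd d → Vec N)
    (hubd : ∃ C : ℝ, ∀ ε : ℝ, 0 < ε → MemLpOn p Ω (u ε) ∧ LpNormOn p Ω (u ε) ≤ C)
    (hvbd : ∃ C : ℝ, ∀ ε : ℝ, 0 < ε → MemLpOn p Ω (v ε) ∧ LpNormOn p Ω (v ε) ≤ C)
    (hmeas : TendstoInMeasure (volume.restrict Ω)
      (fun ε x => u ε x - v ε x) (𝓝[>] (0 : ℝ)) 0)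
    (hequi : PEquiintegrable p Ω (fun ε : {ε : ℝ // 0 < ε} => v ε.1)) :
    (0 : ℝ) ≤ Filter.liminf
        (fun ε => ∫ x in S ε, (g ε x (u ε x) - g ε x (v ε x))) (𝓝[>] (0 : ℝ)) := by
  refine liminf_nonneg_aux _ _ fun δ hδ => ?_
  obtain ⟨Cu, hCu⟩ := hubd
  obtain ⟨Cv, hCv⟩ := hvbd
  set B : ℝ := 3 * volume.real Ω + |Cu| ^ p + |Cv| ^ p + 1 with hB
  have hBpos : 0 < B := by positivity
  set K : ℝ := lam * a + Lam with hK
  have hKpos : 0 < K := by positivity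
  set s : ℝ := δ / (3 * (mu * (N + 1) * B)) with hsdef
  have hs : 0 < s := by positivity
  obtain ⟨m, hm, hmE⟩ := hequi (δ / (3 * Lam)) (by positivity)
  have hsm := hmeas (ENNReal.ofReal s) (by simpa using hs)
  have hpos : (0 : ℝ≥0∞) < ENNReal.ofReal (min m (δ / (3 * K))) := by
    rw [ENNReal.ofReal_pos]; positivity
  filter_upwards [hsm.eventually (gt_mem_nhds hpos), self_mem_nhdsWithin] with ε hε hε0
  have hε0 : 0 < ε := hε0
  set A : Set (Rd d) := {x | ENNReal.ofReal s ≤ edist (u ε x - v ε x) ((0 : Rd d → Vec N) x)}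
    with hA
  rw [Measure.restrict_apply' hΩ] at hε
  set E : Set (Rd d) := toMeasurable volume (A ∩ Ω) ∩ Ω with hEdef
  have hE : MeasurableSet E := (measurableSet_toMeasurable _ _).inter hΩ
  have hvE : volume E < ENNReal.ofReal (min m (δ / (3 * K))) :=
    (measure_mono inter_subset_left).trans_lt ((measure_toMeasurable _).trans_lt hε)
  have hvEr : volume.real E ≤ δ / (3 * K) := by
    refine ENNReal.toReal_le_of_le_ofReal (by positivity) (hvE.le.trans ?_)
    exact ENNReal.ofReal_le_ofReal (min_le_right _ _)
  have hvI := hmE ⟨ε, hε0⟩ E hE inter_subset_right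
    (hvE.trans_le (ENNReal.ofReal_le_ofReal (min_le_left _ _)))
  simp only at hvI
  have hclose : ∀ x ∈ Ω, x ∉ E → eN (u ε x - v ε x) ≤ (N + 1) * s := by
    intro x hx hxE
    have hxA : x ∉ A := fun h => hxE ⟨subset_toMeasurable _ _ ⟨h, hx⟩, hx⟩
    simp only [hA, mem_setOf_eq, not_le, Pi.zero_apply, edist_zero_right] at hxA
    rw [← ofReal_norm, ENNReal.ofReal_lt_ofReal_iff hs] at hxA
    exact (eN_le _).trans (mul_le_mul_of_nonneg_left hxA.le (by positivity))
  have key := core_bound hp ha hlam hLam hmu (by positivity : 0 ≤ (N + 1) * s) hΩ hfin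
    (hS ε hε0) (hSΩ ε) hE inter_subset_right (g ε) (h3 ε hε0) (h4 ε hε0) (u ε) (v ε)
    (hCu ε hε0).1 (hCv ε hε0).1 hclose
  refine le_trans ?_ key
  have b1 := integral_eN_le hp (hCu ε hε0).1 (hCu ε hε0).2
  have b2 := integral_eN_le hp (hCv ε hε0).1 (hCv ε hε0).2
  have t1 : mu * ((N + 1) * s) * (3 * volume.real Ω + (∫ x in Ω, eN (u ε x) ^ p)
      + ∫ x in Ω, eN (v ε x) ^ p) ≤ δ / 3 := by
    calc _ ≤ mu * ((N + 1) * s) * B :=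
          mul_le_mul_of_nonneg_left (by rw [hB]; linarith) (by positivity)
      _ = δ / 3 := by rw [hsdef]; field_simp
  have t2 : K * volume.real E ≤ δ / 3 := by
    calc _ ≤ K * (δ / (3 * K)) := mul_le_mul_of_nonneg_left hvEr hKpos.le
      _ = δ / 3 := by field_simp
  have t3 : Lam * ∫ x in E, eN (v ε x) ^ p ≤ δ / 3 := by
    calc _ ≤ Lam * (δ / (3 * Lam)) := mul_le_mul_of_nonneg_left hvI.le hLam.le
      _ = δ / 3 := by field_simp
  linarith

lemma softPart_subset {d : ℕ} (ε : ℝ) (Ω D0 : Set (Rd d)) : softPart ε Ω D0 ⊆ Ω :=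
  iUnion₂_subset fun _ hz => hz

lemma isOpen_softPart {d : ℕ} {ε : ℝ} (hε : 0 < ε) (Ω : Set (Rd d)) {D0 : Set (Rd d)}
    (hD : IsOpen D0) : IsOpen (softPart ε Ω D0) := by
  refine isOpen_iUnion fun z => isOpen_iUnion fun _ => ?_
  have : cell ε z D0 = (fun x : Rd d => fun i => x i / ε - (z i : ℝ)) ⁻¹' D0 := by
    ext x
    simp only [cell, mem_image, mem_preimage]
    constructor
    · rintro ⟨y, hy, rfl⟩
      convert hy using 1
      funext i
      field_simp
      ring
    · intro h
      refine ⟨_, h, ?_⟩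
      funext i
      field_simp
      ring
  rw [this]
  exact hD.preimage (by fun_prop)

/-- substitution lemma.
For bounded families `{u_ε}`, `{v_ε}` with `u_ε − v_ε → 0` in measure and `{v_ε}`
`p`-equiintegrable, the liminf of the energy differences on the soft and stiff parts
is nonnegative. -/
theorem substitution_lemma
    {d N M : ℕ} (p a lam Lam mu : ℝ) (hp : 1 < p)
    (Ω D0 : Set (Rd d)) (hset : GoodSetting d Ω D0)
    (f0 : ℝ → Vec N → ℝ) (f1 : Rd d → Vec N → ℝ)
    (h1 : H1soft f0 ∧ H1stiff f1)
    (h3 : H3soft p a lam Lam f0 ∧ H3stiff p a lam Lam f1)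
    (h4 : H4soft p mu f0 ∧ H4stiff p mu f1)
    (u v : ℝ → Rd d → Vec N)
    (hubd : ∃ C : ℝ, ∀ ε : ℝ, 0 < ε → MemLpOn p Ω (u ε) ∧ LpNormOn p Ω (u ε) ≤ C)
    (hvbd : ∃ C : ℝ, ∀ ε : ℝ, 0 < ε → MemLpOn p Ω (v ε) ∧ LpNormOn p Ω (v ε) ≤ C)
    (hmeas : TendstoInMeasure (volume.restrict Ω)
      (fun ε x => u ε x - v ε x) (𝓝[>] (0 : ℝ)) 0)
    (hequi : PEquiintegrable p Ω (fun ε : {ε : ℝ // 0 < ε} => v ε.1)) :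
    (0 : ℝ) ≤ Filter.liminf
        (fun ε => ∫ x in softPart ε Ω D0, (f0 ε (u ε x) - f0 ε (v ε x)))
        (𝓝[>] (0 : ℝ)) ∧
    (0 : ℝ) ≤ Filter.liminf
        (fun ε => ∫ x in stiffPart ε Ω D0, (f1 (ε⁻¹ • x) (u ε x) - f1 (ε⁻¹ • x) (v ε x)))
        (𝓝[>] (0 : ℝ)) := by
  obtain ⟨-, hΩ, -, hbd, -, hD, -⟩ := hset
  obtain ⟨⟨ha, hlam, hLam, h3s⟩, -, -, -, h3t⟩ := h3
  obtain ⟨⟨hmu, h4s⟩, -, h4t⟩ := h4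
  have hfin : volume Ω ≠ ⊤ := hbd.measure_lt_top.ne
  refine ⟨?_, ?_⟩
  · exact main_aux hp ha hlam hLam hmu hΩ.measurableSet hfin (fun ε => softPart ε Ω D0)
      (fun ε hε => (isOpen_softPart hε Ω hD).measurableSet) (fun ε => softPart_subset ε Ω D0)
      (fun ε _ ξ => f0 ε ξ) (fun ε hε _ ξ => h3s ε hε ξ) (fun ε hε _ ξ ζ => h4s ε hε ξ ζ)
      u v hubd hvbd hmeas hequi
  · exact main_aux hp ha hlam hLam hmu hΩ.measurableSet hfin (fun ε => stiffPart ε Ω D0)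
      (fun ε hε => hΩ.measurableSet.diff (isOpen_softPart hε Ω hD).measurableSet)
      (fun ε => diff_subset)
      (fun ε x ξ => f1 (ε⁻¹ • x) ξ) (fun ε _ x ξ => h3t _ ξ) (fun ε _ x ξ ζ => h4t _ ξ ζ)
      u v hubd hvbd hmeas hequi

end HC
end
end

section
/- Let v ∈ L^p(Ω;ℝ^N) be such that A v = 0 in W^{−1,p}(Ω;ℝ^M). Then for every ε > 0 the unfolded map S_ε v satisfies A_y(S_ε v)(x,·) = 0 in W^{−1,p}(Q;ℝ^M) for a.e. x ∈ Ω̂_ε. Moreover, if in addition v = 0 in Ω_{1,ε}, then A_y(S_ε v)(x,·) = 0 in W^{−1,p}(𝕋^d;ℝ^M) for a.e. x ∈ Ω̂_ε. -/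
open MeasureTheory Filter Topology Metric Set
open scoped ENNReal NNReal

noncomputable section

attribute [local instance] Classical.propDecidable

namespace HC

/-- The integer vector `z`, seen in `ℝ^d`. -/
def zvec {d : ℕ} (z : Fin d → ℤ) : Rd d := fun i => (z i : ℝ)

theorem isOpen_Qcube (d : ℕ) : IsOpen (Qcube d) := by
  have : Qcube d = Set.pi Set.univ (fun _ => Set.Ioo (0 : ℝ) 1) := by
    ext x; simp [Qcube]
  rw [this]
  exact isOpen_set_pi Set.finite_univ (fun _ _ => isOpen_Ioo)

/-- The inverse of the affine map `y ↦ ε (y + z)`, as a homeomorphism. -/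
def affInv {d : ℕ} (ε : ℝ) (hε : ε ≠ 0) (z : Fin d → ℤ) : Rd d ≃ₜ Rd d :=
  (Homeomorph.smulOfNeZero ε⁻¹ (inv_ne_zero hε)).trans (Homeomorph.addRight (-zvec z))

theorem affInv_apply {d : ℕ} (ε : ℝ) (hε : ε ≠ 0) (z : Fin d → ℤ) (x : Rd d) :
    affInv ε hε z x = ε⁻¹ • x - zvec z := by
  simp [affInv, sub_eq_add_neg]

theorem cell_eq_preimage {d : ℕ} (ε : ℝ) (hε : ε ≠ 0) (z : Fin d → ℤ) (S : Set (Rd d)) :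
    cell ε z S = affInv ε hε z ⁻¹' S := by
  ext x
  simp only [cell, Set.mem_image, Set.mem_preimage, affInv_apply]
  constructor
  · rintro ⟨y, hy, rfl⟩
    convert hy using 1
    ext i
    simp [zvec, hε]
  · intro h
    refine ⟨_, h, ?_⟩
    ext i
    simp [zvec, hε]

theorem isOpen_hatOmega {d : ℕ} (ε : ℝ) (hε : ε ≠ 0) (Ω : Set (Rd d)) :
    IsOpen (hatOmega ε Ω) := by
  unfold hatOmega
  refine isOpen_biUnion fun z _ => ?_
  rw [cell_eq_preimage ε hε]
  exact (isOpen_Qcube d).preimage (affInv ε hε z).continuous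

theorem adjApply_eq_zero {d N M : ℕ} (A : Fin d → (Vec N →ₗ[ℝ] Vec M)) (ψ : Rd d → Vec M)
    (x : Rd d) (hx : x ∉ tsupport ψ) : adjApply A ψ x = 0 := by
  have h : fderiv ℝ ψ x = 0 := by
    by_contra h
    exact hx (support_fderiv_subset ℝ h)
  ext n
  simp [adjApply, h, dot]

theorem adjApply_congr {d N M : ℕ} (A : Fin d → (Vec N →ₗ[ℝ] Vec M)) (ψ φ : Rd d → Vec M)
    (x : Rd d) (hx : ψ =ᶠ[𝓝 x] φ) : adjApply A ψ x = adjApply A φ x := by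
  unfold adjApply
  rw [hx.fderiv_eq]

theorem adjApply_scale {d N M : ℕ} (A : Fin d → (Vec N →ₗ[ℝ] Vec M)) (ψ : Rd d → Vec M)
    (c : ℝ) (w x : Rd d) :
    adjApply A (fun x => ψ (c • x - w)) x = c • adjApply A ψ (c • x - w) := by
  have h : fderiv ℝ (fun x => ψ (c • x - w)) x = c • fderiv ℝ ψ (c • x - w) := by
    have h1 := fderiv_comp_smul (𝕜 := ℝ) (f := fun y => ψ (y - w)) (x := x) c
    rw [fderiv_comp_sub] at h1
    exact h1
  ext n
  simp only [adjApply, h, dot, Pi.smul_apply, smul_eq_mul, ContinuousLinearMap.smul_apply,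
    mul_neg, Finset.mul_sum]
  congr 1
  refine Finset.sum_congr rfl fun i _ => Finset.sum_congr rfl fun j _ => ?_
  ring

theorem dot_smul {N : ℕ} (c : ℝ) (u v : Vec N) : dot u (c • v) = c * dot u v := by
  simp only [dot, Pi.smul_apply, smul_eq_mul, Finset.mul_sum]
  refine Finset.sum_congr rfl fun j _ => ?_
  ring

theorem dot_zero_right {N : ℕ} (u : Vec N) : dot u 0 = 0 := by simp [dot]

theorem dot_zero_left {N : ℕ} (u : Vec N) : dot 0 u = 0 := by simp [dot]

/-- `𝒜`-freeness on each cell contained in `Ω`. -/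
theorem cell_free {d N M : ℕ} (Ω : Set (Rd d))
    (A : Fin d → (Vec N →ₗ[ℝ] Vec M)) (v : Rd d → Vec N) (hfree : AFreeOn A Ω v)
    (ε : ℝ) (hε : 0 < ε) (z : Fin d → ℤ) (hz : cell ε z (Qcube d) ⊆ Ω) :
    AFreeOn A (Qcube d) (fun y => Set.indicator Ω v (ε • (y + zvec z))) := by
  intro ψ hψ
  obtain ⟨hs, hc, ht⟩ := hψ
  have hε0 : ε ≠ 0 := hε.ne'
  have hφeq : (fun x : Rd d => ψ (ε⁻¹ • x - zvec z)) = ψ ∘ affInv ε hε0 z := by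
    ext1 x
    simp [affInv_apply]
  have hφ : TestOn Ω (fun x : Rd d => ψ (ε⁻¹ • x - zvec z)) := by
    refine ⟨?_, ?_, ?_⟩
    · exact hs.comp ((contDiff_id.const_smul ε⁻¹).sub contDiff_const)
    · rw [hφeq]
      exact hc.comp_homeomorph _
    · rw [hφeq, tsupport_comp_eq_preimage]
      refine Subset.trans ?_ hz
      rw [cell_eq_preimage ε hε0]
      exact Set.preimage_mono ht
  have h0 := hfree _ hφ
  set G : Rd d → ℝ := fun x =>
    dot (Set.indicator Ω v x) (adjApply A (fun x : Rd d => ψ (ε⁻¹ • x - zvec z)) x) with hG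
  have h1 : ∫ x, G x = 0 := by
    rw [← h0, ← setIntegral_eq_integral_of_forall_compl_eq_zero (s := Ω)]
    · have hmem : ∀ x ∉ Ω, G x = 0 := by
        intro x hx
        simp only [hG]
        rw [adjApply_eq_zero A _ x (fun h => hx (hφ.2.2 h)), dot_zero_right]
      rw [setIntegral_eq_integral_of_forall_compl_eq_zero hmem,
        setIntegral_eq_integral_of_forall_compl_eq_zero]
      · refine integral_congr_ae (Eventually.of_forall fun x => ?_)
        simp only [hG]
        by_cases hx : x ∈ Ω
        · rw [Set.indicator_of_mem hx]
        · rw [adjApply_eq_zero A _ x (fun h => hx (hφ.2.2 h)), dot_zero_right, dot_zero_right]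
      · intro x hx
        rw [adjApply_eq_zero A _ x (fun h => hx (hφ.2.2 h)), dot_zero_right]
    · intro x hx
      simp only [hG]
      rw [adjApply_eq_zero A _ x (fun h => hx (hφ.2.2 h)), dot_zero_right]
  have h2 : ∫ y : Rd d, G (ε • (y + zvec z)) = 0 := by
    rw [integral_add_right_eq_self (fun y : Rd d => G (ε • y)) (zvec z),
      Measure.integral_comp_smul, h1, smul_zero]
  have h3 : ∀ y : Rd d, G (ε • (y + zvec z)) =
      ε⁻¹ * dot (Set.indicator Ω v (ε • (y + zvec z))) (adjApply A ψ y) := by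
    intro y
    simp only [hG]
    rw [adjApply_scale, dot_smul]
    have : ε⁻¹ • ε • (y + zvec z) - zvec z = y := by
      rw [smul_smul, inv_mul_cancel₀ hε0, one_smul, add_sub_cancel_right]
    rw [this]
  simp only [h3] at h2
  rw [integral_const_mul] at h2
  rw [setIntegral_eq_integral_of_forall_compl_eq_zero]
  · exact (mul_eq_zero.1 h2).resolve_left (inv_ne_zero hε0)
  · intro y hy
    rw [adjApply_eq_zero A _ y (fun h => hy (ht h)), dot_zero_right]

theorem unfold_eq {d N : ℕ} (Ω : Set (Rd d)) (v : Rd d → Vec N)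
    (ε : ℝ) (hε : 0 < ε) (z : Fin d → ℤ) (x : Rd d) (hx : x ∈ cell ε z (Qcube d)) :
    (fun y => unfold ε Ω v x y) = (fun y => Set.indicator Ω v (ε • (y + zvec z))) := by
  obtain ⟨w, hw, rfl⟩ := hx
  ext1 y
  unfold unfold
  congr 1
  ext i
  have : ⌊ε * (w i + (z i : ℝ)) / ε⌋ = z i := by
    rw [mul_div_cancel_left₀ _ hε.ne', Int.floor_add_intCast]
    have : ⌊w i⌋ = 0 := Int.floor_eq_zero_iff.2 ⟨(hw i).1.le, (hw i).2⟩
    rw [this, zero_add]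
  simp only [this, Pi.smul_apply, Pi.add_apply, zvec, smul_eq_mul]
  ring

theorem exists_cutoff {d : ℕ} (D0 : Set (Rd d)) (hD : IsCompact (closure D0))
    (hDQ : closure D0 ⊆ Qcube d) :
    ∃ χ : Rd d → ℝ, ContDiff ℝ (⊤ : ℕ∞) χ ∧ HasCompactSupport χ ∧ tsupport χ ⊆ Qcube d ∧
      ∀ x ∈ D0, χ x = 1 := by
  obtain ⟨L, hL, hDL, hLQ⟩ := exists_compact_between hD (isOpen_Qcube d) hDQ
  obtain ⟨f, hf0, hf1, -⟩ := exists_contMDiffMap_zero_one_of_isClosed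
    (n := (⊤ : ℕ∞)) (modelWithCornersSelf ℝ (Rd d))
    (s := (interior L)ᶜ) (t := closure D0) isOpen_interior.isClosed_compl isClosed_closure
    (Set.disjoint_left.2 fun x hx hx' => hx (hDL hx'))
  have hsub : tsupport f ⊆ L := by
    refine closure_minimal ?_ hL.isClosed
    intro x hx
    by_contra hxL
    exact hx (hf0 (fun h => hxL (interior_subset h)))
  exact ⟨f, f.contMDiff.contDiff, hL.of_isClosed_subset isClosed_closure hsub,
    hsub.trans hLQ, fun x hx => hf1 (subset_closure hx)⟩

/-- In a cell inside `Ω`, points outside the inclusion belong to the stiff part. -/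
theorem mem_stiff {d : ℕ} (Ω D0 : Set (Rd d)) (hDQ : D0 ⊆ Qcube d)
    (ε : ℝ) (hε : 0 < ε) (z : Fin d → ℤ) (hz : cell ε z (Qcube d) ⊆ Ω) (y : Rd d)
    (hy : y ∈ Qcube d) (hyD : y ∉ D0) : ε • (y + zvec z) ∈ stiffPart ε Ω D0 := by
  have heq : ε • (y + zvec z) = fun i => ε * (y i + (z i : ℝ)) := by
    ext i; simp [zvec]
  rw [heq]
  refine ⟨hz ⟨y, hy, rfl⟩, ?_⟩
  simp only [softPart, Set.mem_iUnion, not_exists]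
  rintro z' - ⟨y', hy', he⟩
  have hy'Q := hDQ hy'
  apply hyD
  have : y' = y := by
    ext i
    have h1 := congrFun he i
    have h2 : y' i + (z' i : ℝ) = y i + (z i : ℝ) := mul_left_cancel₀ hε.ne' h1
    have h3 : ⌊y' i + (z' i : ℝ)⌋ = z' i := by
      rw [Int.floor_add_intCast,
        Int.floor_eq_zero_iff.2 ⟨(hy'Q i).1.le, (hy'Q i).2⟩, zero_add]
    have h4 : ⌊y i + (z i : ℝ)⌋ = z i := by
      rw [Int.floor_add_intCast,
        Int.floor_eq_zero_iff.2 ⟨(hy i).1.le, (hy i).2⟩, zero_add]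
    have h5 : z' i = z i := by rw [← h3, h2, h4]
    rw [h5] at h2
    linarith
  exact this ▸ hy'

theorem ae_zero_cell {d N : ℕ} (Ω D0 : Set (Rd d)) (hDQ : D0 ⊆ Qcube d)
    (v : Rd d → Vec N) (ε : ℝ) (hε : 0 < ε) (z : Fin d → ℤ) (hz : cell ε z (Qcube d) ⊆ Ω)
    (h0 : ∀ᵐ x ∂volume.restrict (stiffPart ε Ω D0), v x = 0) :
    ∀ᵐ y : Rd d, y ∈ Qcube d → y ∉ D0 → Set.indicator Ω v (ε • (y + zvec z)) = 0 := by
  have hnull : volume ({x | ¬ v x = 0} ∩ stiffPart ε Ω D0) = 0 :=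
    le_antisymm ((Measure.le_restrict_apply _ _).trans (ae_iff.1 h0).le) zero_le
  have h1 : volume ((fun y : Rd d => ε • y) ⁻¹' ({x | ¬ v x = 0} ∩ stiffPart ε Ω D0)) = 0 := by
    rw [Measure.addHaar_preimage_smul _ hε.ne', hnull, mul_zero]
  have h2 : volume ((fun y : Rd d => y + zvec z) ⁻¹' ((fun y : Rd d => ε • y) ⁻¹'
      ({x | ¬ v x = 0} ∩ stiffPart ε Ω D0))) = 0 := by
    rw [measure_preimage_add_right, h1]
  rw [ae_iff]
  refine measure_mono_null ?_ h2
  intro y hy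
  simp only [Set.mem_setOf_eq, Classical.not_imp] at hy
  obtain ⟨hyQ, hyD, hne⟩ := hy
  have hst := mem_stiff Ω D0 hDQ ε hε z hz y hyQ hyD
  refine ⟨fun h => hne ?_, hst⟩
  rw [Set.indicator_of_mem hst.1]
  exact h

theorem cell_free_torus {d N M : ℕ} (Ω D0 : Set (Rd d)) (hD : IsOpen D0)
    (hDc : IsCompact (closure D0)) (hDQ : closure D0 ⊆ Qcube d)
    (A : Fin d → (Vec N →ₗ[ℝ] Vec M)) (v : Rd d → Vec N) (hfree : AFreeOn A Ω v)
    (ε : ℝ) (hε : 0 < ε) (z : Fin d → ℤ) (hz : cell ε z (Qcube d) ⊆ Ω)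
    (h0 : ∀ᵐ x ∂volume.restrict (stiffPart ε Ω D0), v x = 0) :
    AFreeTorus A (fun y => Set.indicator Ω v (ε • (y + zvec z))) := by
  intro ψ hψ _
  obtain ⟨χ, hχ, hχc, hχQ, hχ1⟩ := exists_cutoff D0 hDc hDQ
  have htest : TestOn (Qcube d) (fun x => χ x • ψ x) := by
    refine ⟨hχ.smul hψ, hχc.smul_right, ?_⟩
    exact (tsupport_smul_subset_left χ ψ).trans hχQ
  rw [← cell_free Ω A v hfree ε hε z hz _ htest]
  refine setIntegral_congr_ae (isOpen_Qcube d).measurableSet ?_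
  filter_upwards [ae_zero_cell Ω D0 (subset_closure.trans hDQ) v ε hε z hz h0] with y hy hyQ
  by_cases hyD : y ∈ D0
  · rw [adjApply_congr A ψ (fun x => χ x • ψ x) y]
    filter_upwards [hD.mem_nhds hyD] with x hx
    rw [hχ1 x hx, one_smul]
  · rw [hy hyQ hyD, dot_zero_left, dot_zero_left]

/-- the unfolding of an `𝒜`-free map is `𝒜`-free in the fast variable. -/
theorem unfolding_A_free
    {d N M : ℕ} (p a lam Lam mu : ℝ) (hp : 1 < p)
    (Ω D0 : Set (Rd d)) (hset : GoodSetting d Ω D0)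
    (A : Fin d → (Vec N →ₗ[ℝ] Vec M))
    (v : Rd d → Vec N) (hv : MemLpOn p Ω v) (hfree : AFreeOn A Ω v) :
    (∀ ε : ℝ, 0 < ε →
      ∀ᵐ x ∂volume.restrict (hatOmega ε Ω),
        AFreeOn A (Qcube d) (fun y => unfold ε Ω v x y)) ∧
    (∀ ε : ℝ, 0 < ε →
      (∀ᵐ x ∂volume.restrict (stiffPart ε Ω D0), v x = 0) →
      ∀ᵐ x ∂volume.restrict (hatOmega ε Ω),
        AFreeTorus A (fun y => unfold ε Ω v x y)) := by
  obtain ⟨-, -, -, -, -, hDo, -, -, hDc, hDQ⟩ := hset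
  refine ⟨fun ε hε => ?_, fun ε hε h0 => ?_⟩
  · filter_upwards [ae_restrict_mem (isOpen_hatOmega ε hε.ne' Ω).measurableSet] with x hx
    simp only [hatOmega, Set.mem_iUnion] at hx
    obtain ⟨z, hz, hxz⟩ := hx
    rw [unfold_eq Ω v ε hε z x hxz]
    exact cell_free Ω A v hfree ε hε z hz
  · filter_upwards [ae_restrict_mem (isOpen_hatOmega ε hε.ne' Ω).measurableSet] with x hx
    simp only [hatOmega, Set.mem_iUnion] at hx
    obtain ⟨z, hz, hxz⟩ := hx
    rw [unfold_eq Ω v ε hε z x hxz]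
    exact cell_free_torus Ω D0 hDo hDc hDQ A v hfree ε hε z hz h0

end HC
end
end
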